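/- arXiv:2507.16107 — 2 statements merged into one kernel-verified Lean document; each statement's English description precedes it below -/
import Mathlib

section
/- Let ℛ⁺ ⊆ {0,1}^K be a set of missingness patterns containing the complete case pattern, and let p and q be full laws such that for every r ∈ ℛ⁺ and all x, o, p(X = x, O = o, R = r) > 0 and q(X = x, O = o, R = r) > 0, while p(X = x, O = o, R = r) = 0 = q(X = x, O = o, R = r) for every r ∉ ℛ⁺. Suppose p and q have the same observed law, and suppose there is a PM-ID compatible pattern DAG H with vertex set ℛ⁺ all of whose labeled edges are valid for both p and q. Then p = q. (Soundness of PM-ID+: the full law is identified under positivity violations confined to patterns outside ℛ⁺.) -/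
/-!
The proof goes by induction along the pattern DAG. Suppose `p` and `q` agree at every parent of the
pattern `r`. For a coordinate `i` missing in `r`, the edge labelled `i` into `r` transports the
conditional of `X_i` given the rest from a parent, so `p` and `q` have the same full conditional of
`X_i` at `r`; hence the ratio `p / q` at `r` does not change when the `i`-th coordinate does. The
ratio is thus a function of the observed coordinates alone, so it factors out of the sum over the
missing coordinates, and equality of the observed laws forces it to be `1`.
-/

open Function Relation

theorem wellFounded_of_forall_not_transGen_self {α : Type*} [Finite α] {R : α → α → Prop}
    (hR : ∀ a, ¬ TransGen R a a) : WellFounded R := by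
  have : Std.Irrefl (TransGen R) := ⟨hR⟩
  exact Subrelation.wf TransGen.single (Finite.wellFounded_of_trans_of_irrefl (TransGen R))

theorem dependsOn_compl_of_update_eq {ι β : Type*} [DecidableEq ι] {𝒳 : ι → Type*}
    {φ : (∀ i, 𝒳 i) → β} {s : Finset ι} (hφ : ∀ i ∈ s, ∀ x y, φ (update x i y) = φ x) :
    DependsOn φ (sᶜ : Set ι) := by
  induction s using Finset.induction_on with
  | empty => simp only [Finset.coe_empty, Set.compl_empty, dependsOn_univ]
  | insert i s _ ih =>
    intro x z hxz
    rw [← hφ i (s.mem_insert_self i) x (z i)]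
    refine ih (fun j hj => hφ j (Finset.mem_insert_of_mem hj)) fun j hj => ?_
    obtain rfl | hji := eq_or_ne j i
    · rw [update_self]
    · rw [update_of_ne hji]
      exact hxz j (by simp_all)

section Fiber

variable {ι 𝕜 : Type*} [DecidableEq ι] {𝒳 : ι → Type*} {i : ι} [Fintype (𝒳 i)]
  {f g : (∀ j, 𝒳 j) → 𝕜} {x : ∀ j, 𝒳 j}

/-- The sum of `f` over the `i`-th coordinate, the others being kept as in `x`: for a probability
mass function, the mass of `X_{-i} = x_{-i}`. It stays a function of all coordinates, constant in
the `i`-th. -/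
def fiberSum [AddCommMonoid 𝕜] (i : ι) [Fintype (𝒳 i)] (f : (∀ j, 𝒳 j) → 𝕜) (x : ∀ j, 𝒳 j) : 𝕜 :=
  ∑ y : 𝒳 i, f (update x i y)

/-- The conditional of the `i`-th coordinate given all others, `f(x_i | x_{-i})`, for a possibly
unnormalized weight `f`; it is `0` where the conditioning event has weight `0`. -/
def fullConditional [Field 𝕜] (i : ι) [Fintype (𝒳 i)] (f : (∀ j, 𝒳 j) → 𝕜) (x : ∀ j, 𝒳 j) : 𝕜 :=
  f x / fiberSum i f x

@[simp]
theorem fiberSum_update [AddCommMonoid 𝕜] (y : 𝒳 i) :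
    fiberSum i f (update x i y) = fiberSum i f x := by
  simp only [fiberSum, update_idem]

theorem fiberSum_pos [AddCommMonoid 𝕜] [PartialOrder 𝕜] [IsOrderedCancelAddMonoid 𝕜]
    (hf : ∀ x, 0 < f x) (x : ∀ j, 𝒳 j) : 0 < fiberSum i f x :=
  Finset.sum_pos (fun y _ => hf (update x i y)) ⟨x i, Finset.mem_univ _⟩

theorem div_eq_fiberSum_div_fiberSum [Field 𝕜] (h : fullConditional i f x = fullConditional i g x)
    (hf : fiberSum i f x ≠ 0) (hg : g x ≠ 0) : f x / g x = fiberSum i f x / fiberSum i g x := by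
  have hfx : f x = g x / fiberSum i g x * fiberSum i f x := (div_eq_iff hf).1 h
  rw [div_eq_iff hg, hfx]
  ring

theorem div_update_eq_div [Field 𝕜] (h : fullConditional i f = fullConditional i g)
    (hf : ∀ x, fiberSum i f x ≠ 0) (hg : ∀ x, g x ≠ 0) (x : ∀ j, 𝒳 j) (y : 𝒳 i) :
    f (update x i y) / g (update x i y) = f x / g x := by
  have hratio (z) : f z / g z = fiberSum i f z / fiberSum i g z :=
    div_eq_fiberSum_div_fiberSum (congrFun h z) (hf z) (hg z)
  rw [hratio, hratio, fiberSum_update, fiberSum_update]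

end Fiber

section CoordMarginal

variable {ι 𝕜 : Type*} [Fintype ι] [DecidableEq ι] {𝒳 : ι → Type*} [∀ i, Fintype (𝒳 i)]
  {s : Set ι} {f g : (∀ i, 𝒳 i) → 𝕜}

open Classical in
/-- The marginal of `f` on the coordinates in `s`, as a function of all coordinates: the sum of `f`
over the points that agree with `x` on `s`. -/
noncomputable def coordMarginal [AddCommMonoid 𝕜] (s : Set ι) (f : (∀ i, 𝒳 i) → 𝕜)
    (x : ∀ i, 𝒳 i) : 𝕜 :=
  ∑ z with ∀ i ∈ s, z i = x i, f z

theorem coordMarginal_pos [AddCommMonoid 𝕜] [PartialOrder 𝕜] [IsOrderedCancelAddMonoid 𝕜]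
    (hf : ∀ x, 0 < f x) (x : ∀ i, 𝒳 i) : 0 < coordMarginal s f x :=
  Finset.sum_pos (fun z _ => hf z) ⟨x, by simp⟩

theorem coordMarginal_eq_div_mul [Field 𝕜] (hg : ∀ x, g x ≠ 0)
    (hfg : DependsOn (fun x => f x / g x) s) (x : ∀ i, 𝒳 i) :
    coordMarginal s f x = f x / g x * coordMarginal s g x := by
  rw [coordMarginal, coordMarginal, Finset.mul_sum]
  refine Finset.sum_congr rfl fun z hz => ?_
  have hzx : f z / g z = f x / g x := hfg (by simpa using hz)
  rw [← hzx, div_mul_cancel₀ _ (hg z)]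

variable [Field 𝕜] [PartialOrder 𝕜] [IsStrictOrderedRing 𝕜]

theorem eq_of_fullConditional_eq_of_coordMarginal_eq (hf : ∀ x, 0 < f x) (hg : ∀ x, 0 < g x)
    (hcond : ∀ i ∉ s, fullConditional i f = fullConditional i g)
    (hmarg : coordMarginal s f = coordMarginal s g) : f = g := by
  have hg₀ (x) : g x ≠ 0 := (hg x).ne'
  have hdep : DependsOn (fun x => f x / g x) s := by
    rw [← compl_compl s, ← sᶜ.toFinite.coe_toFinset]
    exact dependsOn_compl_of_update_eq fun i hi =>
      div_update_eq_div (hcond i (by simpa using hi)) (fun z => (fiberSum_pos hf z).ne') hg₀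
  funext x
  have hmul : f x / g x * coordMarginal s g x = coordMarginal s g x := by
    rw [← coordMarginal_eq_div_mul hg₀ hdep x, hmarg]
  exact (div_eq_one_iff_eq (hg₀ x)).1 ((mul_eq_right₀ (coordMarginal_pos hg x).ne').1 hmul)

end CoordMarginal

section PatternDAG

variable {ι 𝒪 𝕜 : Type*} [DecidableEq ι] {𝒳 : ι → Type*} [∀ i, Fintype (𝒳 i)]

/-- Equality of observed laws: for each missingness pattern `r`, the marginals on the coordinates
observed under `r` agree. -/
def SameObservedLaw [Fintype ι] [AddCommMonoid 𝕜] (p q : (∀ i, 𝒳 i) → 𝒪 → (ι → Bool) → 𝕜) : Prop :=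
  ∀ r o, coordMarginal {i | r i = true} (p · o r) = coordMarginal {i | r i = true} (q · o r)

variable [Field 𝕜] [PartialOrder 𝕜]

/-- Validity of the labeled edge `r' →^i r` for `p`: the conditionals of `X_i` given all other
variables under `r` and `r'` agree wherever both are defined. -/
def IsValidEdge (p : (∀ i, 𝒳 i) → 𝒪 → (ι → Bool) → 𝕜) (r' : ι → Bool) (i : ι) (r : ι → Bool) :
    Prop :=
  ∀ x o, 0 < fiberSum i (p · o r) x → 0 < fiberSum i (p · o r') x →
    fullConditional i (p · o r) x = fullConditional i (p · o r') x

variable [IsStrictOrderedRing 𝕜] {p q : (∀ i, 𝒳 i) → 𝒪 → (ι → Bool) → 𝕜}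

theorem IsValidEdge.fullConditional_eq {r' r : ι → Bool} {i : ι} (h : IsValidEdge p r' i r)
    (hr : ∀ x o, 0 < p x o r) (hr' : ∀ x o, 0 < p x o r') (o : 𝒪) :
    fullConditional i (p · o r) = fullConditional i (p · o r') :=
  funext fun x => h x o (fiberSum_pos (hr · o) x) (fiberSum_pos (hr' · o) x)

theorem pm_id_plus_soundness_general [Fintype ι] {R : Set (ι → Bool)}
    (hp_pos : ∀ r ∈ R, ∀ x o, 0 < p x o r) (hq_pos : ∀ r ∈ R, ∀ x o, 0 < q x o r)
    (h_obs : SameObservedLaw p q) {E : (ι → Bool) → ι → (ι → Bool) → Prop}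
    (hE_source : ∀ r' i r, E r' i r → r' ∈ R)
    (hE_acyclic : ∀ r, ¬ TransGen (fun a b => ∃ i, E a i b) r r)
    (hE_missing : ∀ r ∈ R, ∀ i, r i = false → ∃ r', E r' i r)
    (hp_valid : ∀ r' i r, E r' i r → IsValidEdge p r' i r)
    (hq_valid : ∀ r' i r, E r' i r → IsValidEdge q r' i r) :
    ∀ r ∈ R, ∀ x o, p x o r = q x o r := by
  intro r hr x o
  induction r using (wellFounded_of_forall_not_transGen_self hE_acyclic).induction generalizing x
    with | _ r ih
  have hcond (i) (hi : i ∉ {i | r i = true}) :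
      fullConditional i (p · o r) = fullConditional i (q · o r) := by
    obtain ⟨r', hE⟩ := hE_missing r hr i (by simpa using hi)
    have hr' : r' ∈ R := hE_source r' i r hE
    have hparent : (p · o r') = (q · o r') := funext (ih r' ⟨i, hE⟩ hr')
    calc fullConditional i (p · o r)
      _ = fullConditional i (p · o r') :=
        (hp_valid r' i r hE).fullConditional_eq (hp_pos r hr) (hp_pos r' hr') o
      _ = fullConditional i (q · o r') := by rw [hparent]
      _ = fullConditional i (q · o r) :=
        ((hq_valid r' i r hE).fullConditional_eq (hq_pos r hr) (hq_pos r' hr') o).symm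
  exact congrFun (eq_of_fullConditional_eq_of_coordMarginal_eq (hp_pos r hr · o) (hq_pos r hr · o)
    hcond (h_obs r o)) x

end PatternDAG

/-- Soundness of PM-ID+: the full law is identified under positivity
violations confined to patterns outside `ℛ⁺`, given a PM-ID compatible pattern DAG
with vertex set `ℛ⁺` whose labeled edges are valid for both laws. -/
theorem pm_id_plus_soundness
    (K : ℕ) (hK : 1 ≤ K)
    (𝒳 : Fin K → Type) [∀ i, Fintype (𝒳 i)] [∀ i, Nonempty (𝒳 i)]
    [∀ i, DecidableEq (𝒳 i)]
    (𝒪 : Type) [Fintype 𝒪] [Nonempty 𝒪]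
    (p q : (∀ i, 𝒳 i) → 𝒪 → (Fin K → Bool) → ℝ)
    -- `p` and `q` are probability mass functions (full laws)
    (hp_nonneg : ∀ x o r, 0 ≤ p x o r)
    (hp_sum : ∑ x : ∀ i, 𝒳 i, ∑ o : 𝒪, ∑ r : Fin K → Bool, p x o r = 1)
    (hq_nonneg : ∀ x o r, 0 ≤ q x o r)
    (hq_sum : ∑ x : ∀ i, 𝒳 i, ∑ o : 𝒪, ∑ r : Fin K → Bool, q x o r = 1)
    -- `ℛ⁺` contains the complete case pattern
    (Rplus : Set (Fin K → Bool))
    (hcc : (fun _ => true) ∈ Rplus)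
    -- positivity on `ℛ⁺` and zero support outside `ℛ⁺`, for both laws
    (hp_pos : ∀ r ∈ Rplus, ∀ (x : ∀ i, 𝒳 i) (o : 𝒪), 0 < p x o r)
    (hq_pos : ∀ r ∈ Rplus, ∀ (x : ∀ i, 𝒳 i) (o : 𝒪), 0 < q x o r)
    (hp_zero : ∀ r ∉ Rplus, ∀ (x : ∀ i, 𝒳 i) (o : 𝒪), p x o r = 0)
    (hq_zero : ∀ r ∉ Rplus, ∀ (x : ∀ i, 𝒳 i) (o : 𝒪), q x o r = 0)
    -- `p` and `q` have the same observed law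
    (h_obs : ∀ (r : Fin K → Bool) (o : 𝒪) (x : ∀ i, 𝒳 i),
      (∑ x' : ∀ i, 𝒳 i, if ∀ i, r i = true → x' i = x i then p x' o r else 0)
        = ∑ x' : ∀ i, 𝒳 i, if ∀ i, r i = true → x' i = x i then q x' o r else 0)
    -- a pattern DAG `H` with vertex set `ℛ⁺` and labeled edges `E r̃ i r`
    (E : (Fin K → Bool) → Fin K → (Fin K → Bool) → Prop)
    (hE_vert : ∀ r' i r, E r' i r → r' ∈ Rplus ∧ r ∈ Rplus ∧ r' ≠ r)
    (hE_acyclic : ∀ r, ¬ Relation.TransGen (fun a b => ∃ i, E a i b) r r)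
    -- PM-ID compatibility (I1)
    (hI1_root : ∀ r' i, ¬ E r' i (fun _ => true))
    -- PM-ID compatibility (I2)
    (hI2 : ∀ r ∈ Rplus, ∀ i : Fin K, r i = false →
      ∃ r', E r' i r ∧
        Relation.ReflTransGen (fun a b => ∃ j, E a j b) (fun _ => true) r')
    -- every labeled edge of `H` is valid for `p` and for `q`
    (h_valid_p : ∀ r' i r, E r' i r → ∀ (x : ∀ j, 𝒳 j) (o : 𝒪),
      0 < (∑ y : 𝒳 i, p (Function.update x i y) o r) →
      0 < (∑ y : 𝒳 i, p (Function.update x i y) o r') →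
      p x o r / (∑ y : 𝒳 i, p (Function.update x i y) o r)
        = p x o r' / (∑ y : 𝒳 i, p (Function.update x i y) o r'))
    (h_valid_q : ∀ r' i r, E r' i r → ∀ (x : ∀ j, 𝒳 j) (o : 𝒪),
      0 < (∑ y : 𝒳 i, q (Function.update x i y) o r) →
      0 < (∑ y : 𝒳 i, q (Function.update x i y) o r') →
      q x o r / (∑ y : 𝒳 i, q (Function.update x i y) o r)
        = q x o r' / (∑ y : 𝒳 i, q (Function.update x i y) o r')) :
    ∀ (x : ∀ i, 𝒳 i) (o : 𝒪) (r : Fin K → Bool), p x o r = q x o r := by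
  intro x o r
  by_cases hr : r ∈ Rplus
  · have h_obs' : SameObservedLaw p q := fun r o => funext fun x => by
      simpa only [coordMarginal, Finset.sum_filter, Set.mem_ofPred_eq] using h_obs r o x
    exact pm_id_plus_soundness_general hp_pos hq_pos h_obs'
      (fun r' i r hE => (hE_vert r' i r hE).1) hE_acyclic
      (fun r hr i hi => (hI2 r hr i hi).imp fun _ h => h.1) h_valid_p h_valid_q r hr x o
  · rw [hp_zero r hr, hq_zero r hr]
end

section
/- Let K = 3, let 𝒳_1, 𝒳_2, 𝒳_3 be nonempty finite sets, and let p be a strictly positive probability mass function on 𝒳_1 × 𝒳_2 × 𝒳_3 × {0,1}^3 under which the three conditional independences X_i ⊥ R_i | X_{-i}, R_{-i} hold for i = 1, 2, 3. Define OR(r_1, r_2 | R_3 = r_3, x) = [p(R_1 = r_1 | R_2 = r_2, R_3 = r_3, X = x)/p(R_1 = 1 | R_2 = r_2, R_3 = r_3, X = x)] · [p(R_1 = 1 | R_2 = 1, R_3 = r_3, X = x)/p(R_1 = r_1 | R_2 = 1, R_3 = r_3, X = x)]. Then the three-way interaction term OR(r_1, r_2 | R_3 = r_3, x)/OR(r_1,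 r_2 | R_3 = 1, x) does not depend on x: it takes the same value for all x ∈ 𝒳_1 × 𝒳_2 × 𝒳_3. -/
/-- `p(R_1 = b1 | R_2 = b2, R_3 = b3, X = x)`. -/
noncomputable def condR1 {𝒳₁ 𝒳₂ 𝒳₃ : Type}
    (p : 𝒳₁ → 𝒳₂ → 𝒳₃ → Bool → Bool → Bool → ℝ)
    (x1 : 𝒳₁) (x2 : 𝒳₂) (x3 : 𝒳₃) (b1 b2 b3 : Bool) : ℝ :=
  p x1 x2 x3 b1 b2 b3 / ∑ b : Bool, p x1 x2 x3 b b2 b3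

/-- `OR(r_1, r_2 | R_3 = r_3, x)`. -/
noncomputable def OR12 {𝒳₁ 𝒳₂ 𝒳₃ : Type}
    (p : 𝒳₁ → 𝒳₂ → 𝒳₃ → Bool → Bool → Bool → ℝ)
    (x1 : 𝒳₁) (x2 : 𝒳₂) (x3 : 𝒳₃) (r1 r2 r3 : Bool) : ℝ :=
  (condR1 p x1 x2 x3 r1 r2 r3 / condR1 p x1 x2 x3 true r2 r3)
    * (condR1 p x1 x2 x3 true true r3 / condR1 p x1 x2 x3 r1 true r3)

/-!
The three-way interaction is a ratio of products of joint probabilities that is symmetric in the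
three coordinates of `R`, so it can be regrouped into ratios `p(x, r) / p(x, s)` in which `r` and
`s` differ only in the `i`-th coordinate. Since `X_i ⊥ R_i | X_{-i}, R_{-i}` makes the mass function
a product `u(x_i) v(r_i)` when the other coordinates are fixed, these ratios do not involve `x_i`.
Using the regroupings for `i = 1, 2, 3` in turn changes every coordinate of `x`.
-/

section Factorization

variable {α ρ K : Type*} [Field K]

/-- `q x r` is a product of a function of `x` and a function of `r`. Where `q` is the slice of a
joint mass function at fixed values of the other variables, this is the factorization form of the
conditional independence of `x` and `r` given those values. -/
def Factorizes (q : α → ρ → K) : Prop :=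
  ∃ (u : α → K) (v : ρ → K), ∀ x r, q x r = u x * v r

lemma Factorizes.div_eq_div {q : α → ρ → K} (hq : Factorizes q) {x y : α} {s : ρ}
    (hx : q x s ≠ 0) (hy : q y s ≠ 0) (r : ρ) : q x r / q x s = q y r / q y s := by
  obtain ⟨u, v, huv⟩ := hq
  have ratio_eq {z : α} (hz : q z s ≠ 0) : q z r / q z s = v r / v s := by
    rw [huv] at hz
    rw [huv, huv, mul_div_mul_left _ _ (left_ne_zero_of_mul hz)]
  rw [ratio_eq hx, ratio_eq hy]

lemma factorizes_of_condIndep [LinearOrder K] [IsStrictOrderedRing K] [Fintype α] [Fintype ρ]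
    {q : α → ρ → K} (hq : ∀ x r, 0 ≤ q x r)
    (hCI : ∀ x r, 0 < ∑ y, ∑ b, q y b →
      q x r / ∑ y, ∑ b, q y b
        = ((∑ b, q x b) / ∑ y, ∑ b, q y b) * ((∑ y, q y r) / ∑ y, ∑ b, q y b)) :
    Factorizes q := by
  refine ⟨fun x => ∑ b, q x b, fun r => (∑ y, q y r) / ∑ y, ∑ b, q y b, fun x r => ?_⟩
  have row_nonneg (y : α) : 0 ≤ ∑ b, q y b := Finset.sum_nonneg fun b _ => hq y b
  rcases (Finset.sum_nonneg fun y _ => row_nonneg y).eq_or_lt' with total_eq_zero | total_pos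
  · have row_eq_zero : ∑ b, q x b = 0 :=
      (Finset.sum_eq_zero_iff_of_nonneg fun y _ => row_nonneg y).1 total_eq_zero x
        (Finset.mem_univ x)
    have entry_eq_zero : q x r = 0 :=
      (Finset.sum_eq_zero_iff_of_nonneg fun b _ => hq x b).1 row_eq_zero r (Finset.mem_univ r)
    simp only [entry_eq_zero, row_eq_zero, zero_mul]
  · have scaled := hCI x r total_pos
    rwa [div_mul_eq_mul_div, div_left_inj' total_pos.ne'] at scaled

end Factorization

section Interaction

variable {α β γ K : Type*} [Field K]

/-- The odds ratio of a two-way table `f` at the levels `a, b` relative to the reference levels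
`a', b'`. -/
def oddsRatio (f : α → β → K) (a a' : α) (b b' : β) : K :=
  f a b / f a' b * (f a' b' / f a b')

/-- The three-way interaction of a table `f` at the levels `a, b, c` relative to the reference
levels `a', b', c'`: the odds ratio of the first two coordinates given `c`, divided by the one
given `c'`. -/
def threeWayInteraction (f : α → β → γ → K) (a a' : α) (b b' : β) (c c' : γ) : K :=
  oddsRatio (fun i j => f i j c) a a' b b' / oddsRatio (fun i j => f i j c') a a' b b'

lemma threeWayInteraction_swap_left (f : α → β → γ → K) (a a' : α) (b b' : β) (c c' : γ) :
    threeWayInteraction (fun j i k => f i j k) b b' a a' c c'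
      = threeWayInteraction f a a' b b' c c' := by
  simp only [threeWayInteraction, oddsRatio]
  ring

lemma threeWayInteraction_swap_right (f : α → β → γ → K) (a a' : α) (b b' : β) (c c' : γ) :
    threeWayInteraction (fun i k j => f i j k) a a' c c' b b'
      = threeWayInteraction f a a' b b' c c' := by
  simp only [threeWayInteraction, oddsRatio, div_eq_mul_inv, mul_inv, inv_inv]
  ring

lemma threeWayInteraction_congr_left {f g : α → β → γ → K} {a a' : α}
    (h : ∀ b c, f a b c / f a' b c = g a b c / g a' b c) (b b' : β) (c c' : γ) :
    threeWayInteraction f a a' b b' c c' = threeWayInteraction g a a' b b' c c' := by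
  have h_inv (j : β) (k : γ) : f a' j k / f a j k = g a' j k / g a j k := by
    rw [← inv_div, h, inv_div]
  simp only [threeWayInteraction, oddsRatio, h, h_inv]

lemma threeWayInteraction_congr_middle {f g : α → β → γ → K} {b b' : β}
    (h : ∀ a c, f a b c / f a b' c = g a b c / g a b' c) (a a' : α) (c c' : γ) :
    threeWayInteraction f a a' b b' c c' = threeWayInteraction g a a' b b' c c' := by
  rw [← threeWayInteraction_swap_left f, ← threeWayInteraction_swap_left g]
  exact threeWayInteraction_congr_left h a a' c c'

lemma threeWayInteraction_congr_right {f g : α → β → γ → K} {c c' : γ}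
    (h : ∀ a b, f a b c / f a b c' = g a b c / g a b c') (a a' : α) (b b' : β) :
    threeWayInteraction f a a' b b' c c' = threeWayInteraction g a a' b b' c c' := by
  rw [← threeWayInteraction_swap_right f, ← threeWayInteraction_swap_right g]
  exact threeWayInteraction_congr_middle h a a' b b'

end Interaction

lemma OR12_div_OR12_eq_threeWayInteraction {𝒳₁ 𝒳₂ 𝒳₃ : Type}
    {p : 𝒳₁ → 𝒳₂ → 𝒳₃ → Bool → Bool → Bool → ℝ} {x1 : 𝒳₁} {x2 : 𝒳₂} {x3 : 𝒳₃}
    (hp : ∀ r s t, 0 < p x1 x2 x3 r s t) (r1 r2 r3 t3 : Bool) :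
    OR12 p x1 x2 x3 r1 r2 r3 / OR12 p x1 x2 x3 r1 r2 t3
      = threeWayInteraction (p x1 x2 x3) r1 true r2 true r3 t3 := by
  have margin_ne_zero (s t : Bool) : ∑ b, p x1 x2 x3 b s t ≠ 0 :=
    (Finset.sum_pos (fun b _ => hp b s t) Finset.univ_nonempty).ne'
  simp only [OR12, condR1, threeWayInteraction, oddsRatio,
    div_div_div_cancel_right₀ (margin_ne_zero _ _)]

theorem three_way_interaction_identified_general
    {𝒳₁ 𝒳₂ 𝒳₃ ℛ₁ ℛ₂ ℛ₃ K : Type*} [Field K] {p : 𝒳₁ → 𝒳₂ → 𝒳₃ → ℛ₁ → ℛ₂ → ℛ₃ → K}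
    (hp : ∀ x1 x2 x3 r1 r2 r3, p x1 x2 x3 r1 r2 r3 ≠ 0)
    (h1 : ∀ x2 x3 r2 r3, Factorizes fun x1 r1 => p x1 x2 x3 r1 r2 r3)
    (h2 : ∀ x1 x3 r1 r3, Factorizes fun x2 r2 => p x1 x2 x3 r1 r2 r3)
    (h3 : ∀ x1 x2 r1 r2, Factorizes fun x3 r3 => p x1 x2 x3 r1 r2 r3)
    (r1 s1 : ℛ₁) (r2 s2 : ℛ₂) (r3 s3 : ℛ₃) (x1 y1 : 𝒳₁) (x2 y2 : 𝒳₂) (x3 y3 : 𝒳₃) :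
    threeWayInteraction (p x1 x2 x3) r1 s1 r2 s2 r3 s3
      = threeWayInteraction (p y1 y2 y3) r1 s1 r2 s2 r3 s3 :=
  calc
    threeWayInteraction (p x1 x2 x3) r1 s1 r2 s2 r3 s3
    _ = threeWayInteraction (p y1 x2 x3) r1 s1 r2 s2 r3 s3 :=
      threeWayInteraction_congr_left
        (fun b c => (h1 x2 x3 b c).div_eq_div (hp _ _ _ _ _ _) (hp _ _ _ _ _ _) r1) r2 s2 r3 s3
    _ = threeWayInteraction (p y1 y2 x3) r1 s1 r2 s2 r3 s3 :=
      threeWayInteraction_congr_middle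
        (fun a c => (h2 y1 x3 a c).div_eq_div (hp _ _ _ _ _ _) (hp _ _ _ _ _ _) r2) r1 s1 r3 s3
    _ = threeWayInteraction (p y1 y2 y3) r1 s1 r2 s2 r3 s3 :=
      threeWayInteraction_congr_right
        (fun a b => (h3 y1 y2 a b).div_eq_div (hp _ _ _ _ _ _) (hp _ _ _ _ _ _) r3) r1 s1 r2 s2

/-- Under strict positivity and the three itemwise conditional
independences `X_i ⊥ R_i | X_{-i}, R_{-i}`, the three-way interaction term
`OR(r_1, r_2 | R_3 = r_3, x) / OR(r_1, r_2 | R_3 = 1, x)` does not depend on `x`. -/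
theorem three_way_interaction_identified
    (𝒳₁ 𝒳₂ 𝒳₃ : Type) [Fintype 𝒳₁] [Fintype 𝒳₂] [Fintype 𝒳₃]
    [Nonempty 𝒳₁] [Nonempty 𝒳₂] [Nonempty 𝒳₃]
    (p : 𝒳₁ → 𝒳₂ → 𝒳₃ → Bool → Bool → Bool → ℝ)
    (hpos : ∀ x1 x2 x3 r1 r2 r3, 0 < p x1 x2 x3 r1 r2 r3)
    (hsum : ∑ x1 : 𝒳₁, ∑ x2 : 𝒳₂, ∑ x3 : 𝒳₃, ∑ r1 : Bool, ∑ r2 : Bool, ∑ r3 : Bool,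
      p x1 x2 x3 r1 r2 r3 = 1)
    -- `X_1 ⊥ R_1 | X_2, X_3, R_2, R_3`
    (hCI1 : ∀ (x1 : 𝒳₁) (x2 : 𝒳₂) (x3 : 𝒳₃) (r1 r2 r3 : Bool),
      0 < (∑ y : 𝒳₁, ∑ b : Bool, p y x2 x3 b r2 r3) →
      p x1 x2 x3 r1 r2 r3 / (∑ y : 𝒳₁, ∑ b : Bool, p y x2 x3 b r2 r3)
        = ((∑ b : Bool, p x1 x2 x3 b r2 r3)
            / (∑ y : 𝒳₁, ∑ b : Bool, p y x2 x3 b r2 r3))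
          * ((∑ y : 𝒳₁, p y x2 x3 r1 r2 r3)
            / (∑ y : 𝒳₁, ∑ b : Bool, p y x2 x3 b r2 r3)))
    -- `X_2 ⊥ R_2 | X_1, X_3, R_1, R_3`
    (hCI2 : ∀ (x1 : 𝒳₁) (x2 : 𝒳₂) (x3 : 𝒳₃) (r1 r2 r3 : Bool),
      0 < (∑ y : 𝒳₂, ∑ b : Bool, p x1 y x3 r1 b r3) →
      p x1 x2 x3 r1 r2 r3 / (∑ y : 𝒳₂, ∑ b : Bool, p x1 y x3 r1 b r3)
        = ((∑ b : Bool, p x1 x2 x3 r1 b r3)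
            / (∑ y : 𝒳₂, ∑ b : Bool, p x1 y x3 r1 b r3))
          * ((∑ y : 𝒳₂, p x1 y x3 r1 r2 r3)
            / (∑ y : 𝒳₂, ∑ b : Bool, p x1 y x3 r1 b r3)))
    -- `X_3 ⊥ R_3 | X_1, X_2, R_1, R_2`
    (hCI3 : ∀ (x1 : 𝒳₁) (x2 : 𝒳₂) (x3 : 𝒳₃) (r1 r2 r3 : Bool),
      0 < (∑ y : 𝒳₃, ∑ b : Bool, p x1 x2 y r1 r2 b) →
      p x1 x2 x3 r1 r2 r3 / (∑ y : 𝒳₃, ∑ b : Bool, p x1 x2 y r1 r2 b)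
        = ((∑ b : Bool, p x1 x2 x3 r1 r2 b)
            / (∑ y : 𝒳₃, ∑ b : Bool, p x1 x2 y r1 r2 b))
          * ((∑ y : 𝒳₃, p x1 x2 y r1 r2 r3)
            / (∑ y : 𝒳₃, ∑ b : Bool, p x1 x2 y r1 r2 b))) :
    ∀ (r1 r2 r3 : Bool) (x1 y1 : 𝒳₁) (x2 y2 : 𝒳₂) (x3 y3 : 𝒳₃),
      OR12 p x1 x2 x3 r1 r2 r3 / OR12 p x1 x2 x3 r1 r2 true
        = OR12 p y1 y2 y3 r1 r2 r3 / OR12 p y1 y2 y3 r1 r2 true := by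
  intro r1 r2 r3 x1 y1 x2 y2 x3 y3
  simp only [OR12_div_OR12_eq_threeWayInteraction (hpos _ _ _)]
  exact three_way_interaction_identified_general (fun _ _ _ _ _ _ => (hpos _ _ _ _ _ _).ne')
    (fun x2 x3 r2 r3 => factorizes_of_condIndep (fun _ _ => (hpos _ _ _ _ _ _).le)
      (hCI1 · x2 x3 · r2 r3))
    (fun x1 x3 r1 r3 => factorizes_of_condIndep (fun _ _ => (hpos _ _ _ _ _ _).le)
      (hCI2 x1 · x3 r1 · r3))
    (fun x1 x2 r1 r2 => factorizes_of_condIndep (fun _ _ => (hpos _ _ _ _ _ _).le)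
      (hCI3 x1 x2 · r1 r2 ·))
    r1 true r2 true r3 true x1 y1 x2 y2 x3 y3
end
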